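/- arXiv:2102.06939 — 2 statements merged into one kernel-verified Lean document; each statement's English description precedes it below -/
import Mathlib

section
/- Let G be a simple graph on vertex set V = {0,...,n-1} with edge weights wt : E(G) → ℝ≥0, let k ≥ 1, and let H be a universal family of functions from V to {0,...,4k²-1}. If G contains a k-matching, then for at least half of the functions f ∈ H (i.e., for a set of functions of cardinality at least |H|/2), Red-Com(G,f) contains a k-matching whose weight equals the maximum weight of a k-matching of G. -/
open Finset
open Classical

/-- An edge is a pair `(u, v)` of vertices with `u < v`.  A set `M` of edges
is a matching if no two distinct edges of `M` share an endpoint. -/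
def IsMatchingE (M : Finset (ℕ × ℕ)) : Prop :=
  ∀ e ∈ M, ∀ e' ∈ M, e ≠ e' →
    e.1 ≠ e'.1 ∧ e.1 ≠ e'.2 ∧ e.2 ≠ e'.1 ∧ e.2 ≠ e'.2

/-- `M` is a `k`-matching of the graph with edge set `H`. -/
def IsKMatchingE (H M : Finset (ℕ × ℕ)) (k : ℕ) : Prop :=
  M ⊆ H ∧ M.card = k ∧ IsMatchingE M

/-- The weight of a set of edges. -/
noncomputable def mweight (wt : ℕ × ℕ → ℝ) (M : Finset (ℕ × ℕ)) : ℝ :=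
  ∑ e ∈ M, wt e

/-- The set of vertices covered by a set of edges. -/
def coveredE (M : Finset (ℕ × ℕ)) : Set ℕ := {v | ∃ e ∈ M, v = e.1 ∨ v = e.2}

/-- A matching is nice w.r.t. `f` if no two covered vertices lie in the same
part (preimage of a value of `f`). -/
def NiceE (f : ℕ → ℕ) (M : Finset (ℕ × ℕ)) : Prop := Set.InjOn f (coveredE M)

/-- The strict order `≺` on edges: `e ≺ e'` iff `β e = (wt e, e.1, e.2)` is
lexicographically smaller than `β e'`. -/
def edgeLT (wt : ℕ × ℕ → ℝ) (e e' : ℕ × ℕ) : Prop :=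
  wt e < wt e' ∨ (wt e = wt e' ∧ (e.1 < e'.1 ∨ (e.1 = e'.1 ∧ e.2 < e'.2)))

/-- `CompactG wt f H` : the subgraph of `H` consisting of every edge whose
endpoints lie in distinct parts of `f` and whose `β`-value is maximum among
the edges of `H` between those two parts. -/
noncomputable def CompactG (wt : ℕ × ℕ → ℝ) (f : ℕ → ℕ)
    (H : Finset (ℕ × ℕ)) : Finset (ℕ × ℕ) :=
  H.filter (fun e => f e.1 ≠ f e.2 ∧
    ∀ e' ∈ H, ({f e'.1, f e'.2} : Finset ℕ) = {f e.1, f e.2} → ¬ edgeLT wt e e')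

/-- `RedComG wt f k H` : from `CompactG wt f H` keep each edge that is among
the `8k` `β`-heaviest edges incident to (vertices of) the part of each of its
endpoints, and then keep only the `q = k(16k-1)` `β`-heaviest of those. -/
noncomputable def RedComG (wt : ℕ × ℕ → ℝ) (f : ℕ → ℕ) (k : ℕ)
    (H : Finset (ℕ × ℕ)) : Finset (ℕ × ℕ) :=
  let C := CompactG wt f H
  let R1 := C.filter (fun e =>
    (C.filter (fun e' => (f e'.1 = f e.1 ∨ f e'.2 = f e.1) ∧
      edgeLT wt e e')).card < 8 * k ∧
    (C.filter (fun e' => (f e'.1 = f e.2 ∨ f e'.2 = f e.2) ∧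
      edgeLT wt e e')).card < 8 * k)
  R1.filter (fun e => (R1.filter (fun e' => edgeLT wt e e')).card < k * (16 * k - 1))

/- helper lemmas -/
theorem s11_irrefl (wt : ℕ × ℕ → ℝ) (e : ℕ × ℕ) : ¬ edgeLT wt e e := by
  unfold edgeLT
  simp

theorem s11_trans (wt : ℕ × ℕ → ℝ) {a b c : ℕ × ℕ} (h1 : edgeLT wt a b)
    (h2 : edgeLT wt b c) : edgeLT wt a c := by
  unfold edgeLT at *
  rcases h1 with h1 | ⟨h1, h1'⟩ <;> rcases h2 with h2 | ⟨h2, h2'⟩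
  · left; linarith
  · left; linarith
  · left; linarith
  · right
    refine ⟨h1.trans h2, ?_⟩
    omega

theorem s11_total (wt : ℕ × ℕ → ℝ) {a b : ℕ × ℕ} (h1 : ¬ edgeLT wt a b)
    (h2 : ¬ edgeLT wt b a) : a = b := by
  unfold edgeLT at *
  push Not at h1 h2
  have hw : wt a = wt b := le_antisymm h2.1 h1.1
  have h3 := h1.2 hw
  have h4 := h2.2 hw.symm
  apply Prod.ext <;> omega

theorem s11_le (wt : ℕ × ℕ → ℝ) {a b : ℕ × ℕ} (h1 : edgeLT wt a b) : wt a ≤ wt b := by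
  rcases h1 with h | h
  · exact h.le
  · exact h.1.le

/-- matchings whose covered vertices lie in pairwise distinct parts -/
def s11Good (f : ℕ → ℕ) (M : Finset (ℕ × ℕ)) : Prop :=
  (∀ e ∈ M, f e.1 ≠ f e.2) ∧ ∀ e ∈ M, ∀ e' ∈ M, e ≠ e' →
    f e.1 ≠ f e'.1 ∧ f e.1 ≠ f e'.2 ∧ f e.2 ≠ f e'.1 ∧ f e.2 ≠ f e'.2

/-- the parts touched by a set of edges -/
noncomputable def s11Parts (f : ℕ → ℕ) (M : Finset (ℕ × ℕ)) : Finset ℕ :=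
  M.biUnion (fun e => {f e.1, f e.2})

theorem s11_parts_card (f : ℕ → ℕ) (M : Finset (ℕ × ℕ)) :
    (s11Parts f M).card ≤ 2 * M.card := by
  unfold s11Parts
  have := Finset.card_biUnion_le_card_mul M (fun e => ({f e.1, f e.2} : Finset ℕ)) 2
    (fun e _ => Finset.card_le_two)
  omega

theorem s11_mem_parts (f : ℕ → ℕ) (M : Finset (ℕ × ℕ)) (p : ℕ) :
    p ∈ s11Parts f M ↔ ∃ e ∈ M, p = f e.1 ∨ p = f e.2 := by
  simp [s11Parts]

noncomputable def s11Rank (wt : ℕ × ℕ → ℝ) (E : Finset (ℕ × ℕ)) (e : ℕ × ℕ) : ℕ :=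
  (E.filter (fun e' => edgeLT wt e' e)).card

theorem s11_rank_lt (wt : ℕ × ℕ → ℝ) (E : Finset (ℕ × ℕ)) {a b : ℕ × ℕ} (ha : a ∈ E)
    (h : edgeLT wt a b) : s11Rank wt E a < s11Rank wt E b := by
  unfold s11Rank
  apply Finset.card_lt_card
  rw [Finset.ssubset_iff_of_subset]
  · exact ⟨a, by simp [ha, h], by simp [s11_irrefl]⟩
  · intro x hx
    simp only [Finset.mem_filter] at hx ⊢
    exact ⟨hx.1, s11_trans wt hx.2 h⟩

/-- An exchange-optimal matching exists. -/
theorem s11_opt (wt : ℕ × ℕ → ℝ) (f : ℕ → ℕ) (k : ℕ) (E M0 : Finset (ℕ × ℕ))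
    (h0 : M0 ⊆ E) (hc0 : M0.card = k) (hg0 : s11Good f M0) :
    ∃ M, M ⊆ E ∧ M.card = k ∧ s11Good f M ∧ mweight wt M0 ≤ mweight wt M ∧
      ∀ e ∈ M, ∀ e' ∈ E, edgeLT wt e e' → f e'.1 ≠ f e'.2 →
        f e'.1 ∉ s11Parts f (M.erase e) → f e'.2 ∉ s11Parts f (M.erase e) → False := by
  set S := E.powerset.filter (fun M => M.card = k ∧ s11Good f M) with hS
  have hmem : ∀ M, M ∈ S ↔ M ⊆ E ∧ M.card = k ∧ s11Good f M := by
    intro M; simp [hS]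
  obtain ⟨M, hM, hmax⟩ := Finset.exists_max_image S
    (fun M => (toLex (mweight wt M, ∑ e ∈ M, s11Rank wt E e) : ℝ ×ₗ ℕ))
    ⟨M0, (hmem M0).2 ⟨h0, hc0, hg0⟩⟩
  obtain ⟨hME, hMk, hMg⟩ := (hmem M).1 hM
  refine ⟨M, hME, hMk, hMg, ?_, ?_⟩
  · have := hmax M0 ((hmem M0).2 ⟨h0, hc0, hg0⟩)
    rw [Prod.Lex.toLex_le_toLex] at this
    rcases this with h | h
    · exact h.le
    · exact h.1.le
  · intro e he e' he' hlt hne h1 h2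
    have hnot : e' ∉ M.erase e := fun h => h1 ((s11_mem_parts _ _ _).2 ⟨e', h, Or.inl rfl⟩)
    have key : insert e' (M.erase e) ∈ S := by
      rw [hmem]
      refine ⟨?_, ?_, ?_, ?_⟩
      · intro x hx
        rcases Finset.mem_insert.1 hx with rfl | hx
        · exact he'
        · exact hME (Finset.mem_of_mem_erase hx)
      · rw [Finset.card_insert_of_notMem hnot, Finset.card_erase_of_mem he]
        have : 0 < M.card := Finset.card_pos.2 ⟨e, he⟩
        omega
      · intro x hx
        rcases Finset.mem_insert.1 hx with rfl | hx
        · exact hne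
        · exact hMg.1 x (Finset.mem_of_mem_erase hx)
      · rw [s11_mem_parts] at h1 h2
        push Not at h1 h2
        intro x hx y hy hxy
        rcases Finset.mem_insert.1 hx with hx' | hx' <;>
          rcases Finset.mem_insert.1 hy with hy' | hy'
        · exact absurd (hx'.trans hy'.symm) hxy
        · subst hx'
          exact ⟨(h1 y hy').1, (h1 y hy').2, (h2 y hy').1, (h2 y hy').2⟩
        · subst hy'
          exact ⟨(h1 x hx').1.symm, (h2 x hx').1.symm, (h1 x hx').2.symm, (h2 x hx').2.symm⟩
        · exact hMg.2 x (Finset.mem_of_mem_erase hx') y (Finset.mem_of_mem_erase hy') hxy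
    have := hmax _ key
    rw [Prod.Lex.toLex_le_toLex] at this
    have hr := s11_rank_lt wt E (hME he) hlt
    have hw := s11_le wt hlt
    simp only [mweight, Finset.sum_insert hnot] at this
    have e1 := Finset.add_sum_erase M wt he
    have e2 := Finset.add_sum_erase M (s11Rank wt E) he
    rcases this with h | ⟨_, h⟩
    · linarith
    · omega

theorem s11_notin (f : ℕ → ℕ) (M : Finset (ℕ × ℕ)) (hg : s11Good f M) (e : ℕ × ℕ)
    (he : e ∈ M) : f e.1 ∉ s11Parts f (M.erase e) ∧ f e.2 ∉ s11Parts f (M.erase e) := by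
  simp only [s11_mem_parts]
  push Not
  constructor
  · intro x hx
    have := hg.2 e he x (Finset.mem_of_mem_erase hx) (Finset.ne_of_mem_erase hx).symm
    exact ⟨this.1, this.2.1⟩
  · intro x hx
    have := hg.2 e he x (Finset.mem_of_mem_erase hx) (Finset.ne_of_mem_erase hx).symm
    exact ⟨this.2.2.1, this.2.2.2⟩

theorem s11_step1 (wt : ℕ × ℕ → ℝ) (f : ℕ → ℕ) (k : ℕ) (E T : Finset (ℕ × ℕ))
    (Tp : Finset ℕ) (hT : Tp.card < 8 * k) (hTT : T ⊆ CompactG wt f E) (p : ℕ)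
    (hp : ∀ e ∈ T, f e.1 = p ∨ f e.2 = p) (hpT : p ∉ Tp) (hc : 8 * k ≤ T.card) :
    ∃ e ∈ T, f e.1 ∉ Tp ∧ f e.2 ∉ Tp := by
  by_contra hcon
  push Not at hcon
  have : T.card ≤ Tp.card := by
    apply Finset.card_le_card_of_injOn (fun e => if f e.1 = p then f e.2 else f e.1)
    · intro e he
      have he' : e ∈ T := he
      have h1 := hcon e he'
      show (if f e.1 = p then f e.2 else f e.1) ∈ Tp
      split_ifs with h
      · exact h1 (h ▸ hpT)
      · have h2 := (hp e he').resolve_left h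
        by_contra h3
        exact hpT (h2 ▸ h1 h3)
    · intro a ha b hb hab
      have ha' : a ∈ T := ha
      have hb' : b ∈ T := hb
      have hac := hTT ha'
      have hbc := hTT hb'
      simp only [CompactG, Finset.mem_filter] at hac hbc
      have hset : ({f a.1, f a.2} : Finset ℕ) = {f b.1, f b.2} := by
        have h1 := hp a ha'
        have h2 := hp b hb'
        dsimp only at hab
        ext x
        simp only [Finset.mem_insert, Finset.mem_singleton]
        split_ifs at hab <;> omega
      exact s11_total wt (hac.2.2 b hbc.1 hset.symm) (hbc.2.2 a hac.1 hset)
  omega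

theorem s11_few (wt : ℕ × ℕ → ℝ) (m : ℕ) (S C : Finset (ℕ × ℕ)) (hSC : S ⊆ C)
    (h : ∀ e ∈ S, (C.filter (fun e' => edgeLT wt e e')).card < m) : S.card ≤ m := by
  rcases S.eq_empty_or_nonempty with rfl | hne
  · simp
  obtain ⟨e, he, hmin⟩ := Finset.exists_min_image S (s11Rank wt S) hne
  have : S.erase e ⊆ C.filter (fun e' => edgeLT wt e e') := by
    intro x hx
    have hxS := Finset.mem_of_mem_erase hx
    refine Finset.mem_filter.2 ⟨hSC hxS, ?_⟩
    by_contra hn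
    have : edgeLT wt x e := by
      by_contra hn'
      exact Finset.ne_of_mem_erase hx (s11_total wt hn' hn)
    have := s11_rank_lt wt S hxS this
    have := hmin x hxS
    omega
  have h1 := Finset.card_le_card this
  rw [Finset.card_erase_of_mem he] at h1
  have := h e he
  omega

theorem s11_main (wt : ℕ × ℕ → ℝ) (f : ℕ → ℕ) (k : ℕ) (hk : 1 ≤ k)
    (E M0 : Finset (ℕ × ℕ))
    (h0 : M0 ⊆ E) (hc0 : M0.card = k) (hg0 : s11Good f M0) :
    ∃ M, IsKMatchingE (RedComG wt f k E) M k ∧ mweight wt M0 ≤ mweight wt M := by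
  obtain ⟨M, hME, hMk, hMg, hw, hex⟩ := s11_opt wt f k E M0 h0 hc0 hg0
  have hcE : CompactG wt f E ⊆ E := Finset.filter_subset _ _
  have hcne : ∀ e ∈ CompactG wt f E, f e.1 ≠ f e.2 := fun e he => (Finset.mem_filter.1 he).2.1
  have hcard : ∀ e ∈ M, (s11Parts f (M.erase e)).card ≤ 2 * (k - 1) := by
    intro e he
    have := s11_parts_card f (M.erase e)
    rwa [Finset.card_erase_of_mem he, hMk] at this
  have hC : M ⊆ CompactG wt f E := by
    intro e he
    refine Finset.mem_filter.2 ⟨hME he, hMg.1 e he, ?_⟩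
    intro e' he' hs hlt
    have hn := s11_notin f M hMg e he
    have hne := hMg.1 e he
    have a1 : f e'.1 = f e.1 ∨ f e'.1 = f e.2 := by
      have : f e'.1 ∈ ({f e.1, f e.2} : Finset ℕ) := hs ▸ (by simp)
      simpa using this
    have a2 : f e'.2 = f e.1 ∨ f e'.2 = f e.2 := by
      have : f e'.2 ∈ ({f e.1, f e.2} : Finset ℕ) := hs ▸ (by simp)
      simpa using this
    have b1 : f e.1 = f e'.1 ∨ f e.1 = f e'.2 := by
      have : f e.1 ∈ ({f e'.1, f e'.2} : Finset ℕ) := hs ▸ (by simp)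
      simpa using this
    have b2 : f e.2 = f e'.1 ∨ f e.2 = f e'.2 := by
      have : f e.2 ∈ ({f e'.1, f e'.2} : Finset ℕ) := hs ▸ (by simp)
      simpa using this
    refine hex e he e' he' hlt (by omega) ?_ ?_
    · rcases a1 with h | h <;> rw [h]
      exacts [hn.1, hn.2]
    · rcases a2 with h | h <;> rw [h]
      exacts [hn.1, hn.2]
  have hstep : ∀ e ∈ M, ∀ p, p ∉ s11Parts f (M.erase e) →
      ((CompactG wt f E).filter (fun e' => (f e'.1 = p ∨ f e'.2 = p) ∧
        edgeLT wt e e')).card < 8 * k := by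
    intro e he p hp
    by_contra hcon
    push Not at hcon
    have := hcard e he
    obtain ⟨e', he', h1, h2⟩ := s11_step1 wt f k E _ (s11Parts f (M.erase e)) (by omega)
      (Finset.filter_subset _ _) p (fun x hx => (Finset.mem_filter.1 hx).2.1) hp hcon
    have he'' := Finset.mem_filter.1 he'
    exact hex e he e' (hcE he''.1) he''.2.2 (hcne _ he''.1) h1 h2
  refine ⟨M, ⟨?_, hMk, ?_⟩, hw⟩
  · unfold RedComG
    intro e he
    set C := CompactG wt f E with hCdef
    dsimp only
    set R1 := C.filter (fun e =>
      (C.filter (fun e' => (f e'.1 = f e.1 ∨ f e'.2 = f e.1) ∧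
        edgeLT wt e e')).card < 8 * k ∧
      (C.filter (fun e' => (f e'.1 = f e.2 ∨ f e'.2 = f e.2) ∧
        edgeLT wt e e')).card < 8 * k) with hR1
    have hn := s11_notin f M hMg e he
    refine Finset.mem_filter.2 ⟨Finset.mem_filter.2 ⟨hC he, hstep e he _ hn.1,
      hstep e he _ hn.2⟩, ?_⟩
    by_contra hcon
    push Not at hcon
    set T := s11Parts f (M.erase e) with hTdef
    have hsub : R1.filter (fun e' => edgeLT wt e e') ⊆
        T.biUnion (fun p => R1.filter (fun e' => f e'.1 = p ∨ f e'.2 = p)) := by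
      intro x hx
      obtain ⟨hxR, hlt⟩ := Finset.mem_filter.1 hx
      have hxC : x ∈ C := (Finset.mem_filter.1 hxR).1
      by_contra hnx
      simp only [Finset.mem_biUnion, Finset.mem_filter] at hnx
      push Not at hnx
      refine hex e he x (hcE hxC) hlt (hcne x hxC) ?_ ?_
      · intro h
        exact (hnx _ h hxR).1 rfl
      · intro h
        exact (hnx _ h hxR).2 rfl
    have hle := Finset.card_le_card hsub
    have hle2 := Finset.card_biUnion_le_card_mul T
      (fun p => R1.filter (fun e' => f e'.1 = p ∨ f e'.2 = p)) (8 * k) (by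
        intro p _
        apply s11_few wt (8 * k) _ (C.filter (fun e' => f e'.1 = p ∨ f e'.2 = p))
        · exact Finset.filter_subset_filter _ (Finset.filter_subset _ _)
        · intro x hx
          obtain ⟨hxR, hxp⟩ := Finset.mem_filter.1 hx
          have h12 := (Finset.mem_filter.1 hxR).2
          rw [Finset.filter_filter]
          rcases hxp with rfl | rfl
          · exact h12.1
          · exact h12.2)
    have h3 := hcard e he
    have h4 : T.card * (8 * k) ≤ 2 * (k - 1) * (8 * k) := Nat.mul_le_mul_right _ h3
    have h5 : k * (16 * k - 1) ≤ 2 * (k - 1) * (8 * k) := by omega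
    obtain ⟨j, rfl⟩ : ∃ j, k = j + 1 := ⟨k - 1, by omega⟩
    have h6 : 16 * (j + 1) - 1 = 16 * j + 15 := by omega
    rw [h6, Nat.add_sub_cancel] at h5
    nlinarith
  · intro a ha b hb hab
    have := hMg.2 a ha b hb hab
    refine ⟨?_, ?_, ?_, ?_⟩
    · intro h; exact this.1 (by rw [h])
    · intro h; exact this.2.1 (by rw [h])
    · intro h; exact this.2.2.1 (by rw [h])
    · intro h; exact this.2.2.2 (by rw [h])

theorem s11_prob (n k : ℕ) (hk : 1 ≤ k) (V : Finset ℕ) (hV : ∀ v ∈ V, v < n)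
    (hVc : V.card ≤ 2 * k) (Hfam : Finset (ℕ → ℕ))
    (huniv : ∀ x y : ℕ, x < n → y < n → x ≠ y →
      (Hfam.filter (fun h => h x = h y)).card * (4 * k ^ 2) ≤ Hfam.card) :
    2 * (Hfam.filter (fun f => ¬ Set.InjOn f (V : Set ℕ))).card ≤ Hfam.card := by
  have hsub : Hfam.filter (fun f => ¬ Set.InjOn f (V : Set ℕ)) ⊆
      (V.powersetCard 2).biUnion
        (fun s => Hfam.filter (fun f => ¬ Set.InjOn f (s : Set ℕ))) := by
    intro f hf
    obtain ⟨hfH, hfn⟩ := Finset.mem_filter.1 hf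
    unfold Set.InjOn at hfn
    push Not at hfn
    obtain ⟨x, hx, y, hy, hxy, hne⟩ := hfn
    refine Finset.mem_biUnion.2 ⟨{x, y}, ?_, ?_⟩
    · rw [Finset.mem_powersetCard]
      refine ⟨?_, Finset.card_pair hne⟩
      intro z hz
      rcases Finset.mem_insert.1 hz with rfl | hz
      · exact hx
      · rw [Finset.mem_singleton.1 hz]; exact hy
    · refine Finset.mem_filter.2 ⟨hfH, fun h => hne (h ?_ ?_ hxy)⟩ <;> simp
  have hle := (Finset.card_le_card hsub).trans Finset.card_biUnion_le
  have hb : ∀ s ∈ V.powersetCard 2,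
      (Hfam.filter (fun f => ¬ Set.InjOn f (s : Set ℕ))).card * (4 * k ^ 2) ≤ Hfam.card := by
    intro s hs
    obtain ⟨hsV, hs2⟩ := Finset.mem_powersetCard.1 hs
    obtain ⟨x, y, hxy, rfl⟩ := Finset.card_eq_two.1 hs2
    refine le_trans (Nat.mul_le_mul_right _ (Finset.card_le_card ?_))
      (huniv x y (hV x (hsV (by simp))) (hV y (hsV (by simp))) hxy)
    intro f hf
    obtain ⟨hfH, hfn⟩ := Finset.mem_filter.1 hf
    refine Finset.mem_filter.2 ⟨hfH, ?_⟩
    by_contra hne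
    apply hfn
    intro a ha b hb hab
    simp only [Finset.coe_insert, Finset.coe_singleton, Set.mem_insert_iff,
      Set.mem_singleton_iff] at ha hb
    rcases ha with rfl | rfl <;> rcases hb with rfl | rfl
    · rfl
    · exact absurd hab hne
    · exact absurd hab.symm hne
    · rfl
  have h1 : (∑ s ∈ V.powersetCard 2,
      (Hfam.filter (fun f => ¬ Set.InjOn f (s : Set ℕ))).card) * (4 * k ^ 2)
      ≤ (V.powersetCard 2).card * Hfam.card := by
    rw [Finset.sum_mul]
    exact Finset.sum_le_card_nsmul _ _ _ hb
  rw [Finset.card_powersetCard] at h1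
  have h2 : V.card.choose 2 ≤ k * (2 * k - 1) := by
    refine (Nat.choose_le_choose 2 hVc).trans ?_
    rw [Nat.choose_two_right, mul_assoc, Nat.mul_div_cancel_left _ (by norm_num)]
  have h3 : k * (2 * k - 1) ≤ 2 * k ^ 2 := by
    have : k * (2 * k - 1) ≤ k * (2 * k) := Nat.mul_le_mul_left _ (by omega)
    nlinarith
  have h4 : V.card.choose 2 * Hfam.card ≤ 2 * k ^ 2 * Hfam.card :=
    Nat.mul_le_mul_right _ (h2.trans h3)
  have h5 := Nat.mul_le_mul_right (4 * k ^ 2) hle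
  have hpos : 0 < 2 * k ^ 2 := by positivity
  refine Nat.le_of_mul_le_mul_left ?_ hpos
  calc _ = (Hfam.filter (fun f => ¬ Set.InjOn f (V : Set ℕ))).card * (4 * k ^ 2) := by ring
    _ ≤ _ := h5.trans (h1.trans h4)

/- **Statement 11.** Let `G` be a simple graph on `{0,…,n-1}` with nonnegative
edge weights, `k ≥ 1`, and `Hfam` a universal family of functions from the
vertex set to `{0,…,4k²-1}`.  If `G` contains a `k`-matching, then for at
least half of the functions `f ∈ Hfam`, `RedComG wt f k G` contains a
`k`-matching whose weight equals the maximum weight of a `k`-matching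
of `G`. -/
theorem stmt11 (n k : ℕ) (hk : 1 ≤ k)
    (wt : ℕ × ℕ → ℝ) (hwt : ∀ e, 0 ≤ wt e)
    (E : Finset (ℕ × ℕ)) (hE : ∀ e ∈ E, e.1 < e.2 ∧ e.2 < n)
    (Hfam : Finset (ℕ → ℕ)) (hHne : Hfam.Nonempty)
    (hrange : ∀ f ∈ Hfam, ∀ v, v < n → f v < 4 * k ^ 2)
    (huniv : ∀ x y : ℕ, x < n → y < n → x ≠ y →
      (Hfam.filter (fun h => h x = h y)).card * (4 * k ^ 2) ≤ Hfam.card)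
    (hex : ∃ M, IsKMatchingE E M k) :
    Hfam.card ≤ 2 * (Hfam.filter (fun f =>
      ∃ M, IsKMatchingE (RedComG wt f k E) M k ∧
        ∀ M', IsKMatchingE E M' k → mweight wt M' ≤ mweight wt M)).card := by
  obtain ⟨N, hN⟩ := hex
  obtain ⟨M0, hM0, hmax⟩ := Finset.exists_max_image
    (E.powerset.filter (fun M => IsKMatchingE E M k)) (mweight wt)
    ⟨N, Finset.mem_filter.2 ⟨Finset.mem_powerset.2 hN.1, hN⟩⟩
  obtain ⟨h0, hc0, hm0⟩ := (Finset.mem_filter.1 hM0).2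
  have hV : ∀ v ∈ s11Parts id M0, v < n := by
    intro v hv
    obtain ⟨e, he, h⟩ := (s11_mem_parts _ _ _).1 hv
    have := hE e (h0 he)
    simp only [id] at h
    omega
  have hVc := s11_parts_card id M0
  rw [hc0] at hVc
  have hp := s11_prob n k hk _ hV hVc Hfam huniv
  have hsplit := Finset.card_filter_add_card_filter_not (s := Hfam)
    (fun f => Set.InjOn f (s11Parts id M0 : Set ℕ))
  have hle : (Hfam.filter (fun f => Set.InjOn f (s11Parts id M0 : Set ℕ))).card ≤
      (Hfam.filter (fun f =>
      ∃ M, IsKMatchingE (RedComG wt f k E) M k ∧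
        ∀ M', IsKMatchingE E M' k → mweight wt M' ≤ mweight wt M)).card := by
    apply Finset.card_le_card
    intro f hf
    obtain ⟨hfH, hinj⟩ := Finset.mem_filter.1 hf
    refine Finset.mem_filter.2 ⟨hfH, ?_⟩
    have m1 : ∀ e ∈ M0, e.1 ∈ (s11Parts id M0 : Set ℕ) := fun e he =>
      Finset.mem_coe.2 ((s11_mem_parts _ _ _).2 ⟨e, he, Or.inl rfl⟩)
    have m2 : ∀ e ∈ M0, e.2 ∈ (s11Parts id M0 : Set ℕ) := fun e he =>
      Finset.mem_coe.2 ((s11_mem_parts _ _ _).2 ⟨e, he, Or.inr rfl⟩)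
    obtain ⟨M, hM, hw⟩ := s11_main wt f k hk E M0 h0 hc0 (by
      constructor
      · intro e he h
        have := hE e (h0 he)
        have := hinj (m1 e he) (m2 e he) h
        omega
      · intro a ha b hb hab
        have := hm0 a ha b hb hab
        refine ⟨fun h => this.1 (hinj (m1 a ha) (m1 b hb) h),
          fun h => this.2.1 (hinj (m1 a ha) (m2 b hb) h),
          fun h => this.2.2.1 (hinj (m2 a ha) (m1 b hb) h),
          fun h => this.2.2.2 (hinj (m2 a ha) (m2 b hb) h)⟩)
    exact ⟨M, hM, fun M' hM' => (hmax M' (Finset.mem_filter.2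
      ⟨Finset.mem_powerset.2 hM'.1, hM'⟩)).trans hw⟩
  omega
end

section
/- Let G be a simple graph on vertex set V = {0,...,n-1} with edge weights wt : E(G) → ℝ≥0, let k ≥ 1, let e_1, ..., e_m be an enumeration (insertion order) of the edges of G, and let H be a universal family of functions from V to {0,...,4k²-1}. For each i ∈ {1,...,m}, if the graph G_i consisting of the edges e_1, ..., e_i contains a k-matching, then for at least half of the functions f ∈ H (i.e., for a set of functions of cardinality at least |H|/2), the graph G_i^s contains a k-matching whose weight equals the maximum weight of a k-matching of G_i. -/
open Finset
open Classical

/-- `Gji ε j i` : the graph whose edge set is `{ε j, …, ε i}`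
(empty if `j > i`). -/
def Gji (ε : ℕ → ℕ × ℕ) (j i : ℕ) : Finset (ℕ × ℕ) :=
  (Finset.Icc j i).image ε

/-- With `q = k(16k-1)`, `GfA wt f k ε j` is the graph `G_{j·q}^f`:
`G_0^f = ∅` and, for a positive multiple `i = (j+1)q` of `q`,
`G_i^f = RedComG (G_î^f ∪ G_{i*+1, î})` where `î = jq` is the largest
multiple of `q` strictly below `i` and `i*` is the largest multiple of `q`
strictly below `î` (`i* = 0` if `î = 0`). -/
noncomputable def GfA (wt : ℕ × ℕ → ℝ) (f : ℕ → ℕ) (k : ℕ)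
    (ε : ℕ → ℕ × ℕ) : ℕ → Finset (ℕ × ℕ)
  | 0 => ∅
  | j + 1 => RedComG wt f k
      (GfA wt f k ε j ∪
        Gji ε ((j - 1) * (k * (16 * k - 1)) + 1) (j * (k * (16 * k - 1))))

/-- `streamGs wt f k ε i` is the graph `G_i^s = G_î^f ∪ G_{i*+1, i}`, where
`î = q·⌊(i-1)/q⌋` is the largest multiple of `q = k(16k-1)` strictly below
`i`, and `i*` is the largest multiple of `q` strictly below `î`
(`i* = 0` if `î = 0`). -/
noncomputable def streamGs (wt : ℕ × ℕ → ℝ) (f : ℕ → ℕ) (k : ℕ)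
    (ε : ℕ → ℕ × ℕ) (i : ℕ) : Finset (ℕ × ℕ) :=
  let q := k * (16 * k - 1)
  let jj := (i - 1) / q
  GfA wt f k ε jj ∪ Gji ε ((jj - 1) * q + 1) i

/-- The sort key `β`. -/
noncomputable def betaKey (wt : ℕ × ℕ → ℝ) (e : ℕ × ℕ) : ℝ ×ₗ (ℕ ×ₗ ℕ) :=
  toLex (wt e, toLex e)

theorem edgeLT_iff (wt : ℕ × ℕ → ℝ) (e e' : ℕ × ℕ) :
    edgeLT wt e e' ↔ betaKey wt e < betaKey wt e' := by
  unfold edgeLT betaKey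
  rw [Prod.Lex.toLex_lt_toLex, Prod.Lex.toLex_lt_toLex]

theorem betaKey_inj (wt : ℕ × ℕ → ℝ) {e e' : ℕ × ℕ}
    (h : betaKey wt e = betaKey wt e') : e = e' := by
  unfold betaKey at h
  have h1 := toLex.injective h
  have h2 := (Prod.ext_iff.mp h1).2
  exact toLex.injective h2

/-- Edges of `N` have pairwise disjoint two-element images under `f`. -/
def NiceM (f : ℕ → ℕ) (N : Finset (ℕ × ℕ)) : Prop :=
  (∀ e ∈ N, f e.1 ≠ f e.2) ∧ ∀ e ∈ N, ∀ e' ∈ N, e ≠ e' →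
    f e.1 ≠ f e'.1 ∧ f e.1 ≠ f e'.2 ∧ f e.2 ≠ f e'.1 ∧ f e.2 ≠ f e'.2

theorem NiceM.isMatching {f : ℕ → ℕ} {N : Finset (ℕ × ℕ)} (h : NiceM f N) :
    IsMatchingE N := by
  intro e he e' he' hne
  obtain ⟨h1, h2, h3, h4⟩ := h.2 e he e' he' hne
  exact ⟨fun h => h1 (by rw [h]), fun h => h2 (by rw [h]), fun h => h3 (by rw [h]),
    fun h => h4 (by rw [h])⟩

theorem compact_inj (wt : ℕ × ℕ → ℝ) (f : ℕ → ℕ) (H : Finset (ℕ × ℕ))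
    {a b : ℕ × ℕ} (ha : a ∈ CompactG wt f H) (hb : b ∈ CompactG wt f H)
    (h : ({f a.1, f a.2} : Finset ℕ) = {f b.1, f b.2}) : a = b := by
  unfold CompactG at ha hb
  rw [Finset.mem_filter] at ha hb
  have h1 := ha.2.2 b hb.1 h.symm
  have h2 := hb.2.2 a ha.1 h
  rw [edgeLT_iff] at h1 h2
  exact betaKey_inj wt (le_antisymm (not_lt.mp h2) (not_lt.mp h1))

/-- A set of compact edges incident to part `A` whose other part is in `T`. -/
theorem incident_card (wt : ℕ × ℕ → ℝ) (f : ℕ → ℕ) (H S : Finset (ℕ × ℕ)) (T : Finset ℕ)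
    (A : ℕ) (hS : S ⊆ CompactG wt f H)
    (hA : ∀ e ∈ S, (f e.1 = A ∧ f e.2 ∈ T) ∨ (f e.2 = A ∧ f e.1 ∈ T)) :
    S.card ≤ T.card := by
  have h1 : S.card = (S.image (fun e => ({f e.1, f e.2} : Finset ℕ))).card := by
    rw [Finset.card_image_of_injOn]
    intro a ha b hb hab
    exact compact_inj wt f H (hS ha) (hS hb) hab
  rw [h1]
  refine le_trans (Finset.card_le_card (t := T.image (fun t => ({A, t} : Finset ℕ))) ?_)
    Finset.card_image_le
  intro x hx
  obtain ⟨e, he, rfl⟩ := Finset.mem_image.mp hx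
  rcases hA e he with ⟨h, ht⟩ | ⟨h, ht⟩
  · exact Finset.mem_image.mpr ⟨_, ht, by rw [h]⟩
  · exact Finset.mem_image.mpr ⟨_, ht, by rw [h, Finset.pair_comm]⟩

theorem best_mem_RedCom (wt : ℕ × ℕ → ℝ) (f : ℕ → ℕ) (k : ℕ) (hk : 1 ≤ k)
    (H : Finset (ℕ × ℕ)) (T : Finset ℕ) (hT : T.card ≤ 2 * (k - 1)) (e : ℕ × ℕ)
    (heH : e ∈ H) (hef : f e.1 ≠ f e.2) (h1 : f e.1 ∉ T) (h2 : f e.2 ∉ T)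
    (hmax : ∀ e' ∈ H, f e'.1 ≠ f e'.2 → f e'.1 ∉ T → f e'.2 ∉ T → ¬ edgeLT wt e e') :
    e ∈ RedComG wt f k H := by
  have hCH : ∀ a ∈ CompactG wt f H, a ∈ H ∧ f a.1 ≠ f a.2 := by
    intro a ha
    unfold CompactG at ha
    rw [Finset.mem_filter] at ha
    exact ⟨ha.1, ha.2.1⟩
  have heC : e ∈ CompactG wt f H := by
    unfold CompactG
    rw [Finset.mem_filter]
    refine ⟨heH, hef, ?_⟩
    intro e' he' hpair
    have m1 : f e'.1 ∈ ({f e.1, f e.2} : Finset ℕ) := by rw [← hpair]; simp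
    have m2 : f e'.2 ∈ ({f e.1, f e.2} : Finset ℕ) := by rw [← hpair]; simp
    have m3 : f e.1 ∈ ({f e'.1, f e'.2} : Finset ℕ) := by rw [hpair]; simp
    have m4 : f e.2 ∈ ({f e'.1, f e'.2} : Finset ℕ) := by rw [hpair]; simp
    simp only [Finset.mem_insert, Finset.mem_singleton] at m1 m2 m3 m4
    apply hmax e' he'
    · intro h; apply hef; omega
    · rcases m1 with h | h <;> rw [h] <;> assumption
    · rcases m2 with h | h <;> rw [h] <;> assumption
  have hpart : ∀ A, A ∉ T → ((CompactG wt f H).filter (fun e' => (f e'.1 = A ∨ f e'.2 = A) ∧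
      edgeLT wt e e')).card < 8 * k := by
    intro A hAT
    refine lt_of_le_of_lt (incident_card wt f H _ T A (Finset.filter_subset _ _) ?_)
      (by omega)
    intro a ha
    rw [Finset.mem_filter] at ha
    obtain ⟨haC, hinc, hlt⟩ := ha
    obtain ⟨haH, haf⟩ := hCH a haC
    by_contra hcon
    push Not at hcon
    refine hmax a haH haf ?_ ?_ hlt
    · rcases hinc with h | h
      · rw [h]; exact hAT
      · exact hcon.2 h
    · rcases hinc with h | h
      · exact hcon.1 h
      · rw [h]; exact hAT
  unfold RedComG
  simp only
  set C := CompactG wt f H with hC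
  set R1 := C.filter (fun e =>
    (C.filter (fun e' => (f e'.1 = f e.1 ∨ f e'.2 = f e.1) ∧
      edgeLT wt e e')).card < 8 * k ∧
    (C.filter (fun e' => (f e'.1 = f e.2 ∨ f e'.2 = f e.2) ∧
      edgeLT wt e e')).card < 8 * k) with hR1
  have hdeg : ∀ t, (R1.filter (fun a => f a.1 = t ∨ f a.2 = t)).card ≤ 8 * k := by
    intro t
    set S := R1.filter (fun a => f a.1 = t ∨ f a.2 = t) with hS
    rcases S.eq_empty_or_nonempty with h0 | hne
    · rw [h0]; simp
    obtain ⟨s, hs, hmin⟩ := Finset.exists_min_image S (betaKey wt) hne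
    have hs' := hs
    rw [hS, Finset.mem_filter, hR1, Finset.mem_filter] at hs'
    have hsub : S.erase s ⊆ C.filter (fun e' => (f e'.1 = t ∨ f e'.2 = t) ∧
        edgeLT wt s e') := by
      intro a ha
      rw [Finset.mem_erase] at ha
      have ha' := ha.2
      rw [hS, Finset.mem_filter, hR1, Finset.mem_filter] at ha'
      rw [Finset.mem_filter]
      refine ⟨ha'.1.1, ha'.2, ?_⟩
      rw [edgeLT_iff]
      exact lt_of_le_of_ne (hmin a ha.2) (fun h => ha.1 (betaKey_inj wt h).symm)
    have hlt : (C.filter (fun e' => (f e'.1 = t ∨ f e'.2 = t) ∧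
        edgeLT wt s e')).card < 8 * k := by
      rcases hs'.2 with h | h
      · rw [← h]; exact hs'.1.2.1
      · rw [← h]; exact hs'.1.2.2
    have := Finset.card_le_card hsub
    rw [Finset.card_erase_of_mem hs] at this
    omega
  rw [Finset.mem_filter]
  refine ⟨?_, ?_⟩
  · rw [hR1, Finset.mem_filter]
    exact ⟨heC, hpart _ h1, hpart _ h2⟩
  have hsub : R1.filter (fun e' => edgeLT wt e e') ⊆
      T.biUnion (fun t => R1.filter (fun a => f a.1 = t ∨ f a.2 = t)) := by
    intro a ha
    rw [Finset.mem_filter] at ha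
    have haC : a ∈ C := (Finset.mem_filter.mp ha.1).1
    obtain ⟨haH, haf⟩ := hCH a haC
    rw [Finset.mem_biUnion]
    by_cases hA : f a.1 ∈ T
    · exact ⟨_, hA, Finset.mem_filter.mpr ⟨ha.1, Or.inl rfl⟩⟩
    by_cases hB : f a.2 ∈ T
    · exact ⟨_, hB, Finset.mem_filter.mpr ⟨ha.1, Or.inr rfl⟩⟩
    exact absurd ha.2 (hmax a haH haf hA hB)
  have hle := (Finset.card_le_card hsub).trans
    (Finset.card_biUnion_le_card_mul T _ (8 * k) (fun t _ => hdeg t))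
  obtain ⟨l, rfl⟩ : ∃ l, k = l + 1 := ⟨k - 1, by omega⟩
  have h3 : T.card * (8 * (l + 1)) ≤ (2 * l) * (8 * (l + 1)) :=
    Nat.mul_le_mul_right _ (by simpa using hT)
  have h4 : 16 * (l + 1) - 1 = 16 * l + 15 := by omega
  rw [h4]
  nlinarith

theorem replace_step (wt : ℕ × ℕ → ℝ) (f : ℕ → ℕ) (k : ℕ) (hk : 1 ≤ k)
    (H F : Finset (ℕ × ℕ)) : ∀ (c : ℕ) (N : Finset (ℕ × ℕ)),
    (N \ (RedComG wt f k H ∪ F)).card = c → N ⊆ H ∪ F → N.card = k → NiceM f N →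
    ∃ N' ⊆ RedComG wt f k H ∪ F, N'.card = k ∧ NiceM f N' ∧
      mweight wt N ≤ mweight wt N' := by
  intro c
  induction c with
  | zero =>
    intro N hc hN hcard hnice
    rw [Finset.card_eq_zero, Finset.sdiff_eq_empty_iff_subset] at hc
    exact ⟨N, hc, hcard, hnice, le_rfl⟩
  | succ c ih =>
    intro N hc hN hcard hnice
    obtain ⟨e, he⟩ : (N \ (RedComG wt f k H ∪ F)).Nonempty := by
      rw [← Finset.card_pos]; omega
    have heN := (Finset.mem_sdiff.mp he).1
    have heR := (Finset.mem_sdiff.mp he).2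
    have heH : e ∈ H := by
      rcases Finset.mem_union.mp (hN heN) with h | h
      · exact h
      · exact absurd (Finset.mem_union_right _ h) heR
    set T := (N.erase e).image (fun a => f a.1) ∪ (N.erase e).image (fun a => f a.2) with hTdef
    have hT : T.card ≤ 2 * (k - 1) := by
      have h0 : (N.erase e).card = k - 1 := by rw [Finset.card_erase_of_mem heN, hcard]
      have h2 : ((N.erase e).image (fun a => f a.1)).card ≤ (N.erase e).card :=
        Finset.card_image_le
      have h3 : ((N.erase e).image (fun a => f a.2)).card ≤ (N.erase e).card :=
        Finset.card_image_le
      rw [hTdef]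
      refine (Finset.card_union_le _ _).trans ?_
      omega
    have hTmem : ∀ x, x ∉ T ↔ ∀ a ∈ N.erase e, f a.1 ≠ x ∧ f a.2 ≠ x := by
      intro x
      rw [hTdef, Finset.mem_union, Finset.mem_image, Finset.mem_image]
      push Not
      exact ⟨fun h a ha => ⟨h.1 a ha, h.2 a ha⟩,
        fun h => ⟨fun a ha => (h a ha).1, fun a ha => (h a ha).2⟩⟩
    set K := H.filter (fun a => f a.1 ≠ f a.2 ∧ f a.1 ∉ T ∧ f a.2 ∉ T) with hK
    have heK : e ∈ K := by
      rw [hK, Finset.mem_filter]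
      refine ⟨heH, hnice.1 e heN, (hTmem _).mpr ?_, (hTmem _).mpr ?_⟩
      · intro a ha
        rw [Finset.mem_erase] at ha
        obtain ⟨p1, p2, p3, p4⟩ := hnice.2 a ha.2 e heN ha.1
        exact ⟨p1, p3⟩
      · intro a ha
        rw [Finset.mem_erase] at ha
        obtain ⟨p1, p2, p3, p4⟩ := hnice.2 a ha.2 e heN ha.1
        exact ⟨p2, p4⟩
    obtain ⟨b, hb, hmax⟩ := Finset.exists_max_image K (betaKey wt) ⟨e, heK⟩
    have hb' := hb
    rw [hK, Finset.mem_filter] at hb'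
    obtain ⟨hbH, hbf, hb1, hb2⟩ := hb'
    have hbR : b ∈ RedComG wt f k H := by
      refine best_mem_RedCom wt f k hk H T hT b hbH hbf hb1 hb2 ?_
      intro e' he' q1 q2 q3
      rw [edgeLT_iff, not_lt]
      exact hmax e' (Finset.mem_filter.mpr ⟨he', q1, q2, q3⟩)
    have hwtle : wt e ≤ wt b := by
      have h := hmax e heK
      have h' : ¬ edgeLT wt b e := by rw [edgeLT_iff, not_lt]; exact h
      by_contra hcon
      exact h' (Or.inl (not_le.mp hcon))
    have hb1' := (hTmem _).mp hb1
    have hb2' := (hTmem _).mp hb2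
    have hbN : b ∉ N.erase e := fun h => (hb1' b h).1 rfl
    obtain ⟨N', hN', hc', hn', hw'⟩ := ih (insert b (N.erase e)) (by
        have : insert b (N.erase e) \ (RedComG wt f k H ∪ F)
            = (N \ (RedComG wt f k H ∪ F)).erase e := by
          ext a
          simp only [Finset.mem_sdiff, Finset.mem_insert, Finset.mem_erase, Finset.mem_union]
          constructor
          · rintro ⟨rfl | h, h'⟩
            · exact absurd (Or.inl hbR) h'
            · exact ⟨h.1, h.2, h'⟩
          · rintro ⟨h, h', h''⟩
            exact ⟨Or.inr ⟨h, h'⟩, h''⟩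
        rw [this, Finset.card_erase_of_mem he, hc]; rfl)
      (by
        intro a ha
        rcases Finset.mem_insert.mp ha with rfl | h
        · exact Finset.mem_union_left _ hbH
        · exact hN (Finset.mem_of_mem_erase h))
      (by rw [Finset.card_insert_of_notMem hbN, Finset.card_erase_of_mem heN]; omega)
      (by
        constructor
        · intro a ha
          rcases Finset.mem_insert.mp ha with rfl | h
          · exact hbf
          · exact hnice.1 a (Finset.mem_of_mem_erase h)
        · intro a ha a' ha' hne
          rcases Finset.mem_insert.mp ha with rfl | h
          · rcases Finset.mem_insert.mp ha' with rfl | h'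
            · exact absurd rfl hne
            · exact ⟨(hb1' a' h').1.symm, (hb1' a' h').2.symm, (hb2' a' h').1.symm,
                (hb2' a' h').2.symm⟩
          · rcases Finset.mem_insert.mp ha' with rfl | h'
            · exact ⟨(hb1' a h).1, (hb2' a h).1, (hb1' a h).2, (hb2' a h).2⟩
            · exact hnice.2 a (Finset.mem_of_mem_erase h) a' (Finset.mem_of_mem_erase h') hne)
    refine ⟨N', hN', hc', hn', le_trans ?_ hw'⟩
    unfold mweight
    rw [Finset.sum_insert hbN, ← Finset.add_sum_erase N wt heN]
    linarith

theorem Gji_split (ε : ℕ → ℕ × ℕ) (a b : ℕ) (hab : a ≤ b) :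
    Gji ε 1 a ∪ Gji ε (a + 1) b = Gji ε 1 b := by
  unfold Gji
  rw [← Finset.image_union]
  congr 1
  ext x
  simp only [Finset.mem_union, Finset.mem_Icc]
  omega

theorem stream_step (wt : ℕ × ℕ → ℝ) (f : ℕ → ℕ) (k : ℕ) (hk : 1 ≤ k)
    (ε : ℕ → ℕ × ℕ) : ∀ (j : ℕ) (F N : Finset (ℕ × ℕ)),
    N ⊆ Gji ε 1 ((j - 1) * (k * (16 * k - 1))) ∪ F → N.card = k → NiceM f N →
    ∃ N' ⊆ GfA wt f k ε j ∪ F, N'.card = k ∧ NiceM f N' ∧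
      mweight wt N ≤ mweight wt N' := by
  intro j
  induction j with
  | zero =>
    intro F N hN hc hn
    refine ⟨N, ?_, hc, hn, le_rfl⟩
    simpa [GfA, Gji] using hN
  | succ j ih =>
    intro F N hN hc hn
    set q := k * (16 * k - 1) with hq
    have hsplit := Gji_split ε ((j - 1) * q) (j * q) (Nat.mul_le_mul_right _ (by omega))
    obtain ⟨N1, h1, h2, h3, h4⟩ := ih (Gji ε ((j - 1) * q + 1) (j * q) ∪ F) N (by
      rw [← Finset.union_assoc, hsplit]
      simpa using hN) hc hn
    rw [← Finset.union_assoc] at h1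
    obtain ⟨N2, g1, g2, g3, g4⟩ := replace_step wt f k hk _ F _ N1 rfl h1 h2 h3
    exact ⟨N2, g1, g2, g3, h4.trans g4⟩

theorem NiceM_of_injOn (f : ℕ → ℕ) (M : Finset (ℕ × ℕ)) (W : Finset ℕ)
    (hW : ∀ e ∈ M, e.1 ∈ W ∧ e.2 ∈ W) (hlt : ∀ e ∈ M, e.1 ≠ e.2) (hM : IsMatchingE M)
    (hf : ∀ x ∈ W, ∀ y ∈ W, x ≠ y → f x ≠ f y) : NiceM f M := by
  refine ⟨fun e he => hf _ (hW e he).1 _ (hW e he).2 (hlt e he), ?_⟩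
  intro e he e' he' hne
  obtain ⟨h1, h2, h3, h4⟩ := hM e he e' he' hne
  exact ⟨hf _ (hW e he).1 _ (hW e' he').1 h1, hf _ (hW e he).1 _ (hW e' he').2 h2,
    hf _ (hW e he).2 _ (hW e' he').1 h3, hf _ (hW e he).2 _ (hW e' he').2 h4⟩

theorem bad_count (n k : ℕ) (hk : 1 ≤ k) (Hfam : Finset (ℕ → ℕ))
    (huniv : ∀ x y : ℕ, x < n → y < n → x ≠ y →
      (Hfam.filter (fun h => h x = h y)).card * (4 * k ^ 2) ≤ Hfam.card)
    (W : Finset ℕ) (hWn : ∀ x ∈ W, x < n) (hWc : W.card ≤ 2 * k) :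
    2 * (Hfam.filter (fun f => ¬ ∀ x ∈ W, ∀ y ∈ W, x ≠ y → f x ≠ f y)).card ≤ Hfam.card := by
  set B := Hfam.filter (fun f => ¬ ∀ x ∈ W, ∀ y ∈ W, x ≠ y → f x ≠ f y) with hB
  set P := W.offDiag with hP
  have hdc := Finset.sum_card_bipartiteAbove_eq_sum_card_bipartiteBelow
    (s := Hfam) (t := P) (fun f p => f p.1 = f p.2)
  have hlow : 2 * B.card ≤ ∑ f ∈ Hfam, (P.bipartiteAbove (fun f p => f p.1 = f p.2) f).card := by
    calc 2 * B.card = ∑ f ∈ B, 2 := by simp [mul_comm]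
      _ ≤ ∑ f ∈ B, (P.bipartiteAbove (fun f p => f p.1 = f p.2) f).card := by
          apply Finset.sum_le_sum
          intro f hf
          rw [hB, Finset.mem_filter] at hf
          have hf2 := hf.2
          push Not at hf2
          obtain ⟨x, hx, y, hy, hxy, hfe⟩ := hf2
          have hpair : ({(x, y), (y, x)} : Finset (ℕ × ℕ)).card = 2 := by
            apply Finset.card_pair
            intro h
            exact hxy (Prod.ext_iff.mp h).1
          rw [← hpair]
          apply Finset.card_le_card
          intro p hp
          rw [Finset.mem_bipartiteAbove, hP, Finset.mem_offDiag]
          simp only [Finset.mem_insert, Finset.mem_singleton] at hp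
          rcases hp with rfl | rfl
          · exact ⟨⟨hx, hy, hxy⟩, hfe⟩
          · exact ⟨⟨hy, hx, hxy.symm⟩, hfe.symm⟩
      _ ≤ _ := Finset.sum_le_sum_of_subset (Finset.filter_subset _ _)
  have hup : (∑ p ∈ P, (Hfam.bipartiteBelow (fun f p => f p.1 = f p.2) p).card) * (4 * k ^ 2)
      ≤ P.card * Hfam.card := by
    rw [Finset.sum_mul, ← smul_eq_mul (a := P.card), ← Finset.sum_const]
    apply Finset.sum_le_sum
    intro p hp
    rw [hP, Finset.mem_offDiag] at hp
    have := huniv p.1 p.2 (hWn _ hp.1) (hWn _ hp.2.1) hp.2.2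
    have heq : Hfam.bipartiteBelow (fun f p => f p.1 = f p.2) p =
        Hfam.filter (fun h => h p.1 = h p.2) := by
      ext a
      rw [Finset.mem_bipartiteBelow, Finset.mem_filter]
    rw [heq]
    exact this
  have hPc : P.card ≤ 4 * k ^ 2 := by
    rw [hP, Finset.offDiag_card]
    have : W.card * W.card ≤ (2 * k) * (2 * k) := Nat.mul_le_mul hWc hWc
    have h2 : (2 * k) * (2 * k) = 4 * k ^ 2 := by ring
    omega
  rw [hdc] at hlow
  have hpos : 0 < 4 * k ^ 2 := by positivity
  refine Nat.le_of_mul_le_mul_right ?_ hpos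
  calc 2 * B.card * (4 * k ^ 2) ≤ _ := Nat.mul_le_mul_right _ hlow
    _ ≤ P.card * Hfam.card := hup
    _ ≤ 4 * k ^ 2 * Hfam.card := Nat.mul_le_mul_right _ hPc
    _ = Hfam.card * (4 * k ^ 2) := mul_comm _ _

/- **Statement 12.** Let `G` be a simple graph on `{0,…,n-1}` with nonnegative
edge weights, `k ≥ 1`, `e_1, …, e_m` (here `ε 1, …, ε m`) an enumeration of
the edges of `G`, and `Hfam` a universal family of functions from the vertex
set to `{0,…,4k²-1}`.  For each `i ∈ {1,…,m}`, if `G_i` (the graph on the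
first `i` edges) contains a `k`-matching, then for at least half of the
functions `f ∈ Hfam`, the graph `G_i^s` contains a `k`-matching whose weight
equals the maximum weight of a `k`-matching of `G_i`. -/
theorem stmt12 (n k m : ℕ) (hk : 1 ≤ k)
    (wt : ℕ × ℕ → ℝ) (hwt : ∀ e, 0 ≤ wt e)
    (ε : ℕ → ℕ × ℕ)
    (hwf : ∀ t ∈ Finset.Icc 1 m, (ε t).1 < (ε t).2 ∧ (ε t).2 < n)
    (hinj : Set.InjOn ε ↑(Finset.Icc 1 m))
    (Hfam : Finset (ℕ → ℕ)) (hHne : Hfam.Nonempty)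
    (hrange : ∀ f ∈ Hfam, ∀ v, v < n → f v < 4 * k ^ 2)
    (huniv : ∀ x y : ℕ, x < n → y < n → x ≠ y →
      (Hfam.filter (fun h => h x = h y)).card * (4 * k ^ 2) ≤ Hfam.card)
    (i : ℕ) (hi1 : 1 ≤ i) (him : i ≤ m)
    (hex : ∃ M, IsKMatchingE (Gji ε 1 i) M k) :
    Hfam.card ≤ 2 * (Hfam.filter (fun f =>
      ∃ M, IsKMatchingE (streamGs wt f k ε i) M k ∧
        ∀ M', IsKMatchingE (Gji ε 1 i) M' k →
          mweight wt M' ≤ mweight wt M)).card := by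
  have hq : 0 < k * (16 * k - 1) := Nat.mul_pos (by omega) (by omega)
  -- a maximum-weight `k`-matching of `G_i`
  obtain ⟨M, hM, hMmax⟩ : ∃ M, IsKMatchingE (Gji ε 1 i) M k ∧
      ∀ M', IsKMatchingE (Gji ε 1 i) M' k → mweight wt M' ≤ mweight wt M := by
    obtain ⟨M0, hM0⟩ := hex
    obtain ⟨M, hM, hmax⟩ := Finset.exists_max_image
      ((Gji ε 1 i).powerset.filter (fun M => IsKMatchingE (Gji ε 1 i) M k)) (mweight wt)
      ⟨M0, Finset.mem_filter.mpr ⟨Finset.mem_powerset.mpr hM0.1, hM0⟩⟩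
    exact ⟨M, (Finset.mem_filter.mp hM).2, fun M' hM' => hmax M'
      (Finset.mem_filter.mpr ⟨Finset.mem_powerset.mpr hM'.1, hM'⟩)⟩
  have hedge : ∀ e ∈ M, e.1 < e.2 ∧ e.2 < n := by
    intro e he
    have h := hM.1 he
    unfold Gji at h
    obtain ⟨t, ht, rfl⟩ := Finset.mem_image.mp h
    rw [Finset.mem_Icc] at ht
    exact hwf t (Finset.mem_Icc.mpr ⟨ht.1, ht.2.trans him⟩)
  set W := M.image Prod.fst ∪ M.image Prod.snd with hW
  have hWmem : ∀ e ∈ M, e.1 ∈ W ∧ e.2 ∈ W := fun e he =>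
    ⟨Finset.mem_union_left _ (Finset.mem_image_of_mem _ he),
      Finset.mem_union_right _ (Finset.mem_image_of_mem _ he)⟩
  have hWn : ∀ x ∈ W, x < n := by
    intro x hx
    rcases Finset.mem_union.mp hx with h | h
    · obtain ⟨e, he, rfl⟩ := Finset.mem_image.mp h
      exact (hedge e he).1.trans (hedge e he).2
    · obtain ⟨e, he, rfl⟩ := Finset.mem_image.mp h
      exact (hedge e he).2
  have hWc : W.card ≤ 2 * k := by
    have h2 : (M.image Prod.fst).card ≤ M.card := Finset.card_image_le
    have h3 : (M.image Prod.snd).card ≤ M.card := Finset.card_image_le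
    have h4 := hM.2.1
    rw [hW]
    refine (Finset.card_union_le _ _).trans ?_
    omega
  have hbad := bad_count n k hk Hfam
    (by intro x y hx hy hxy; convert huniv x y hx hy hxy using 3) W hWn hWc
  have hsum := Finset.card_filter_add_card_filter_not (s := Hfam)
    (fun f : ℕ → ℕ => ∀ x ∈ W, ∀ y ∈ W, x ≠ y → f x ≠ f y)
  have hgood : (Hfam.filter (fun f : ℕ → ℕ => ∀ x ∈ W, ∀ y ∈ W, x ≠ y → f x ≠ f y)).card ≤
      (Hfam.filter (fun f =>
      ∃ M, IsKMatchingE (streamGs wt f k ε i) M k ∧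
        ∀ M', IsKMatchingE (Gji ε 1 i) M' k →
          mweight wt M' ≤ mweight wt M)).card := by
    apply Finset.card_le_card
    intro f hf
    rw [Finset.mem_filter] at hf ⊢
    refine ⟨hf.1, ?_⟩
    have hnice := NiceM_of_injOn f M W hWmem (fun e he => (hedge e he).1.ne) hM.2.2 hf.2
    have hle : ((i - 1) / (k * (16 * k - 1)) - 1) * (k * (16 * k - 1)) ≤ i := by
      refine (Nat.mul_le_mul_right _ (Nat.sub_le _ 1)).trans ?_
      exact (Nat.div_mul_le_self _ _).trans (Nat.sub_le _ _)
    obtain ⟨N, h1, h2, h3, h4⟩ := stream_step wt f k hk ε ((i - 1) / (k * (16 * k - 1)))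
      (Gji ε (((i - 1) / (k * (16 * k - 1)) - 1) * (k * (16 * k - 1)) + 1) i) M
      (by rw [Gji_split ε _ i hle]; exact hM.1) hM.2.1 hnice
    exact ⟨N, ⟨h1, h2, h3.isMatching⟩, fun M' hM' => (hMmax M' hM').trans h4⟩
  omega
end
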